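/- Let n ≥ 1 and d ≥ 1 be integers, let q be a prime power whose characteristic is at least d(d−1)+1, and let δ ≥ 0. Let T be a nonempty finite set and H : T → 𝔽_q^n a function such that for every nonzero polynomial P ∈ 𝔽_q[x_1,…,x_n] of total degree at most 2d−1, the number of s ∈ T with P(H(s)) = 0 is at most δ·|T|. Let f ∈ 𝔽_q[x_1,…,x_n,y] be a polynomial of total degree at most d that is indecomposable over 𝔽_q. For (r,s) ∈ T×T, write a = (a_1,…,a_n) = H(r), b = (b_1,…,b_n) = H(s), and F_{r,s} = f(b_1·x + a_1·y, …, b_n·x + a_n·y, y) ∈ 𝔽_q[x,y]. Then the number of pairs (r,s) ∈ T×T for which F_{r,s} is indecomposable over 𝔽_q is at least (1 − 2^{d−1}·δ)·|T|². -/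

import Mathlib

open MvPolynomial

/-- A polynomial `f ∈ F[xᵢ : i ∈ σ]` is *decomposable* over `F` if `f = g(h)` for some
univariate `g ∈ F[z]` with `deg g ≥ 2` and some `h ∈ F[xᵢ : i ∈ σ]`. -/
def MvPolynomial.Decomposable {F : Type*} [CommSemiring F] {σ : Type*}
    (f : MvPolynomial σ F) : Prop :=
  ∃ (g : Polynomial F) (h : MvPolynomial σ F),
    2 ≤ g.natDegree ∧ f = Polynomial.aeval h g

/-- A polynomial is *indecomposable* over `F` if it is non-constant and not
decomposable over `F`. -/
def MvPolynomial.Indecomposable {F : Type*} [CommSemiring F] {σ : Type*}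
    (f : MvPolynomial σ F) : Prop :=
  0 < f.totalDegree ∧ ¬ f.Decomposable

/-!
After the shear `x ↦ x + a y`, and up to a scalar, `f` is monic of degree `D = deg f` in `y`, as
soon as `a` is not a zero of `f_D(x, 1)`, where `f_D` is the leading form of `f`. If a monic
polynomial in `y` is `g(k)` with `deg g = m` invertible, then up to an affine substitution `k` is
its approximate `m`-th root, the unique monic `h` of degree `deg k` for which subtracting `h ^ m`
from that polynomial leaves only terms of degree less than `(m - 1) * deg h`. Approximate roots
commute with ring homomorphisms, in particular with the restriction of `x` to the line spanned by
`b`. So if `f(b x + a y, y) = g(k)` with `deg g = m`, then the restriction of the sheared `f` to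
this line lies in `K[h]`, where `h` is the restriction of the approximate `m`-th root of `f`.

If `f` is indecomposable, then it does not lie in `K[h]` for its own approximate root `h`. Let `t`
be an element of `f + K[h]` of least degree in `y`. The leading form of the leading coefficient of
`t` is a nonzero polynomial of degree at most `D`, and for every `b` at which it does not vanish
the restriction of `f` stays outside `K[h]`. Since `deg g` divides `D`, only the divisors `m ≥ 2` of
`D` have to be excluded, so together with the condition on `a` there is one polynomial to avoid for
every divisor of `D`.
-/

namespace PlaneRestriction

open scoped Polynomial

section ApproximateRoots

variable {S : Type*} [CommRing S] {f h k : S[X]} {m : ℕ}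

/-- `h` is an *approximate `m`-th root* of `f`, in the sense of Abhyankar and Moh: it is monic and
`h ^ m` agrees with `f` in all degrees from `(m - 1) * deg h` on. -/
structure IsApproxRoot (m : ℕ) (f h : S[X]) : Prop where
  monic : h.Monic
  degree_sub_lt : (f - h ^ m).degree < ((h.natDegree * (m - 1) : ℕ) : WithBot ℕ)

lemma natDegree_pow_mul_pow (hh : h.Monic) (hk : k.Monic) (hhk : h.natDegree = k.natDegree)
    {i : ℕ} (hi : i < m) :
    (h ^ i * k ^ (m - 1 - i)).natDegree = h.natDegree * (m - 1) := by
  rw [(hh.pow i).natDegree_mul (hk.pow _), hh.natDegree_pow, hk.natDegree_pow, ← hhk, ← add_mul,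
    mul_comm, Nat.add_sub_cancel' (Nat.le_sub_one_of_lt hi)]

lemma natDegree_geomSum₂_le (hh : h.Monic) (hk : k.Monic) (hhk : h.natDegree = k.natDegree) :
    (∑ i ∈ Finset.range m, h ^ i * k ^ (m - 1 - i)).natDegree ≤ h.natDegree * (m - 1) :=
  Polynomial.natDegree_sum_le_of_forall_le _ _ fun _ hi =>
    (natDegree_pow_mul_pow hh hk hhk (Finset.mem_range.mp hi)).le

lemma coeff_geomSum₂ (hh : h.Monic) (hk : k.Monic) (hhk : h.natDegree = k.natDegree) :
    (∑ i ∈ Finset.range m, h ^ i * k ^ (m - 1 - i)).coeff (h.natDegree * (m - 1)) = m := by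
  have hcoeff : ∀ i ∈ Finset.range m,
      (h ^ i * k ^ (m - 1 - i)).coeff (h.natDegree * (m - 1)) = 1 := fun i hi => by
    rw [← natDegree_pow_mul_pow hh hk hhk (Finset.mem_range.mp hi),
      ((hh.pow i).mul (hk.pow _)).coeff_natDegree]
  rw [Polynomial.finsetSum_coeff, Finset.sum_congr rfl hcoeff]
  simp

lemma IsApproxRoot.unique [IsDomain S] (hm : (m : S) ≠ 0) (hh : IsApproxRoot m f h)
    (hk : IsApproxRoot m f k) (hhk : h.natDegree = k.natDegree) : h = k := by
  set Q := ∑ i ∈ Finset.range m, h ^ i * k ^ (m - 1 - i)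
  by_contra hne
  have hlt : (Q * (h - k)).degree < ((h.natDegree * (m - 1) : ℕ) : WithBot ℕ) := by
    rw [geom_sum₂_mul, ← sub_sub_sub_cancel_left (k ^ m) (h ^ m) f]
    exact (Polynomial.degree_sub_le _ _).trans_lt
      (max_lt (hhk ▸ hk.degree_sub_lt) hh.degree_sub_lt)
  have hQ : ((h.natDegree * (m - 1) : ℕ) : WithBot ℕ) ≤ Q.degree :=
    Polynomial.le_degree_of_ne_zero (by rwa [coeff_geomSum₂ hh.monic hk.monic hhk])
  rw [Polynomial.degree_mul] at hlt
  exact hlt.not_ge (hQ.trans (le_add_of_nonneg_right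
    (Polynomial.zero_le_degree_iff.mpr (sub_ne_zero.mpr hne))))

lemma IsApproxRoot.map {R : Type*} [CommRing R] [Nontrivial R] (hh : IsApproxRoot m f h)
    (φ : S →+* R) : IsApproxRoot m (f.map φ) (h.map φ) where
  monic := hh.monic.map φ
  degree_sub_lt := by
    rw [← Polynomial.map_pow, ← Polynomial.map_sub, hh.monic.natDegree_map]
    exact Polynomial.degree_map_le.trans_lt hh.degree_sub_lt

lemma IsApproxRoot.comp [IsDomain S] (hh : IsApproxRoot m f h) (hk : k.Monic)
    (hk0 : k.natDegree ≠ 0) : IsApproxRoot m (f.comp k) (h.comp k) where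
  monic := hh.monic.comp hk hk0
  degree_sub_lt := by
    rw [← Polynomial.pow_comp, ← Polynomial.sub_comp]
    rcases eq_or_ne (f - h ^ m) 0 with hr | hr
    · rw [hr, Polynomial.zero_comp, Polynomial.degree_zero]
      exact WithBot.bot_lt_coe _
    · have hlt := (Polynomial.natDegree_lt_iff_degree_lt hr).mpr hh.degree_sub_lt
      refine Polynomial.degree_le_natDegree.trans_lt (Nat.cast_lt.mpr ?_)
      rw [Polynomial.natDegree_comp, Polynomial.natDegree_comp, mul_right_comm]
      exact Nat.mul_lt_mul_of_pos_right hlt (Nat.pos_of_ne_zero hk0)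

lemma IsApproxRoot.isMonicOfDegree [Nontrivial S] (hh : IsApproxRoot m f h) :
    f.IsMonicOfDegree (h.natDegree * m) := by
  have hdeg : (h ^ m).degree = ((h.natDegree * m : ℕ) : WithBot ℕ) := by
    rw [Polynomial.degree_eq_natDegree (hh.monic.pow m).ne_zero, hh.monic.natDegree_pow, mul_comm]
  have hlt : (f - h ^ m).degree < (h ^ m).degree := hdeg ▸ hh.degree_sub_lt.trans_le
    (Nat.cast_le.mpr (Nat.mul_le_mul_left _ (Nat.sub_le m 1)))
  rw [← add_sub_cancel (h ^ m) f]
  exact ⟨Polynomial.natDegree_eq_of_degree_eq_some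
    ((Polynomial.degree_add_eq_left_of_degree_lt hlt).trans hdeg),
    (hh.monic.pow m).add_of_left hlt⟩

lemma degree_C_mul_X_pow_lt (c : S) {j : ℕ} (hj : j < h.natDegree) :
    (Polynomial.C c * Polynomial.X ^ j).degree < h.degree := by
  refine (Polynomial.degree_C_mul_X_pow_le j c).trans_lt ?_
  rw [Polynomial.degree_eq_natDegree (Polynomial.ne_zero_of_natDegree_gt hj)]
  exact_mod_cast hj

/-- Adding `c * X ^ j` to `h` adds `m * c` to the coefficient of `h ^ m` in degree
`j + (m - 1) * deg h` and changes nothing in higher degrees. -/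
lemma degree_sub_add_pow_lt {j : ℕ} {c : S} (hh : h.Monic) (hj : j < h.natDegree)
    (hdeg : (f - h ^ m).degree ≤ ((j + h.natDegree * (m - 1) : ℕ) : WithBot ℕ))
    (hc : m * c = (f - h ^ m).coeff (j + h.natDegree * (m - 1))) :
    (f - (h + Polynomial.C c * Polynomial.X ^ j) ^ m).degree <
      ((j + h.natDegree * (m - 1) : ℕ) : WithBot ℕ) := by
  set h' := h + Polynomial.C c * Polynomial.X ^ j with h'_def
  set Q := ∑ i ∈ Finset.range m, h' ^ i * h ^ (m - 1 - i)
  have hlt := degree_C_mul_X_pow_lt c hj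
  have hh' : h'.Monic := hh.add_of_left hlt
  have hdeg' : h'.natDegree = h.natDegree :=
    Polynomial.natDegree_eq_of_degree_eq (Polynomial.degree_add_eq_left_of_degree_lt hlt)
  have hQ_deg : Q.natDegree ≤ h.natDegree * (m - 1) :=
    hdeg' ▸ natDegree_geomSum₂_le hh' hh hdeg'
  have hQ_coeff : Q.coeff (h.natDegree * (m - 1)) = m := hdeg' ▸ coeff_geomSum₂ hh' hh hdeg'
  have hsub : f - h' ^ m = (f - h ^ m) - Polynomial.C c * Q * Polynomial.X ^ j := by
    linear_combination (geom_sum₂_mul h' h m) - Q * h'_def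
  rw [hsub, Polynomial.degree_lt_iff_coeff_zero]
  intro i hi
  obtain ⟨i, rfl⟩ := Nat.exists_eq_add_of_le' ((Nat.le_add_right _ _).trans hi)
  rw [Polynomial.coeff_sub, Polynomial.coeff_mul_X_pow, Polynomial.coeff_C_mul]
  rcases (show h.natDegree * (m - 1) ≤ i by omega).eq_or_lt with rfl | hi
  · rw [add_comm, ← hc, hQ_coeff, mul_comm, sub_self]
  · rw [Polynomial.coeff_eq_zero_of_natDegree_lt (hQ_deg.trans_lt hi), mul_zero, sub_zero]
    exact Polynomial.coeff_eq_zero_of_degree_lt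
      (hdeg.trans_lt (Nat.cast_lt.mpr (by omega)))

end ApproximateRoots

section Decompositions

variable {K : Type*} [Field K]

lemma exists_isApproxRoot_X_add_C {g : K[X]} (hg : g.Monic) (hm : (g.natDegree : K) ≠ 0) :
    ∃ c : K, IsApproxRoot g.natDegree g (Polynomial.X + Polynomial.C c) := by
  obtain ⟨m, hgm⟩ : ∃ m, g.natDegree = m := ⟨_, rfl⟩
  rw [hgm] at hm ⊢
  have hm0 : m ≠ 0 := by rintro rfl; simp at hm
  have hdeg : (g - Polynomial.X ^ m).degree ≤ ((m - 1 : ℕ) : WithBot ℕ) :=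
    Polynomial.natDegree_le_iff_degree_le.mp <| Nat.le_sub_one_of_lt <|
      Polynomial.IsMonicOfDegree.natDegree_sub_X_pow hm0 ⟨hgm, hg⟩
  obtain ⟨c, hc⟩ : ∃ c : K, m * c = (g - Polynomial.X ^ m).coeff (m - 1) :=
    ⟨_, mul_div_cancel₀ _ hm⟩
  refine ⟨c, Polynomial.monic_X_add_C c, ?_⟩
  have hlt := degree_sub_add_pow_lt (m := m) (j := 0) (c := c) Polynomial.monic_X
    (f := g) (by rw [Polynomial.natDegree_X]; exact one_pos)
  rw [Polynomial.natDegree_X, zero_add, one_mul, pow_zero, mul_one] at hlt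
  rw [Polynomial.natDegree_X_add_C, one_mul]
  exact hlt hdeg hc

lemma natDegree_aeval {S : Type*} [CommRing S] [IsDomain S] [Algebra K S] (h : S[X]) (g : K[X]) :
    (Polynomial.aeval h g).natDegree = g.natDegree * h.natDegree := by
  rw [← Polynomial.aeval_map_algebraMap S, ← Polynomial.comp_eq_aeval, Polynomial.natDegree_comp,
    Polynomial.natDegree_map]

lemma leadingCoeff_aeval {S : Type*} [CommRing S] [IsDomain S] [Algebra K S] {h : S[X]}
    (hh : h.natDegree ≠ 0) (g : K[X]) :
    (Polynomial.aeval h g).leadingCoeff =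
      algebraMap K S g.leadingCoeff * h.leadingCoeff ^ g.natDegree := by
  rw [← Polynomial.aeval_map_algebraMap S, ← Polynomial.comp_eq_aeval,
    Polynomial.leadingCoeff_comp hh, Polynomial.natDegree_map, Polynomial.leadingCoeff_map]

lemma exists_monic_eq_aeval {f k : K[X][X]} {g : K[X]} (hf : f.Monic) (hf0 : f.natDegree ≠ 0)
    (hfk : f = Polynomial.aeval k g) :
    ∃ (k₁ : K[X][X]) (g₁ : K[X]), k₁.Monic ∧ g₁.Monic ∧ g₁.natDegree = g.natDegree ∧
      f = Polynomial.aeval k₁ g₁ := by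
  have hdeg : g.natDegree ≠ 0 ∧ k.natDegree ≠ 0 := by
    rwa [hfk, natDegree_aeval, mul_ne_zero_iff] at hf0
  have hlc := leadingCoeff_aeval hdeg.2 g
  rw [← hfk, hf.leadingCoeff] at hlc
  obtain ⟨l, hl, hlk⟩ := Polynomial.isUnit_iff.mp <|
    (isUnit_pow_iff hdeg.1).mp (IsUnit.of_mul_eq_one_right _ hlc.symm)
  have hl0 : l ≠ 0 := hl.ne_zero
  have hk₁ : (l⁻¹ • k).Monic := by
    rw [Polynomial.Monic, ← algebraMap_smul K[X] l⁻¹ k, Polynomial.smul_eq_C_mul,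
      Polynomial.leadingCoeff_mul, Polynomial.leadingCoeff_C, ← hlk, Polynomial.algebraMap_eq,
      ← Polynomial.C_mul, inv_mul_cancel₀ hl0, Polynomial.C_1]
  have hfk₁ : f = Polynomial.aeval (l⁻¹ • k) (g.comp (Polynomial.C l * Polynomial.X)) := by
    rw [Polynomial.aeval_comp, map_mul, Polynomial.aeval_C, Polynomial.aeval_X,
      ← Algebra.smul_def, smul_inv_smul₀ hl0, hfk]
  have hg₁ : (g.comp (Polynomial.C l * Polynomial.X)).natDegree = g.natDegree := by
    rw [Polynomial.natDegree_comp, Polynomial.natDegree_C_mul_X l hl0, mul_one]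
  refine ⟨l⁻¹ • k, g.comp (Polynomial.C l * Polynomial.X), hk₁, ?_, hg₁, hfk₁⟩
  have hk₁0 : (l⁻¹ • k).natDegree ≠ 0 := by
    rw [hfk₁, natDegree_aeval] at hf0
    exact right_ne_zero_of_mul hf0
  have hlc₁ := leadingCoeff_aeval hk₁0 (g.comp (Polynomial.C l * Polynomial.X))
  rw [← hfk₁, hf.leadingCoeff, hk₁.leadingCoeff, one_pow, mul_one] at hlc₁
  exact (FaithfulSMul.algebraMap_injective K K[X] (hlc₁.symm.trans (map_one _).symm) :)

lemma IsApproxRoot.exists_eq_aeval {f h k : K[X][X]} {g : K[X]} {m : ℕ} (hh : IsApproxRoot m f h)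
    (hh0 : h.natDegree ≠ 0) (hm : (m : K) ≠ 0) (hg : g.natDegree = m)
    (hfk : f = Polynomial.aeval k g) : ∃ g₁ : K[X], f = Polynomial.aeval h g₁ := by
  have hm0 : m ≠ 0 := by rintro rfl; simp at hm
  have hf := hh.isMonicOfDegree
  obtain ⟨k₁, g₁, hk₁, hg₁, hg₁m, hfk₁⟩ :=
    exists_monic_eq_aeval hf.monic (by rw [hf.natDegree_eq]; exact mul_ne_zero hh0 hm0) hfk
  have hk₁h : k₁.natDegree = h.natDegree := by
    have hdeg := natDegree_aeval k₁ g₁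
    rw [← hfk₁, hf.natDegree_eq, hg₁m, hg, mul_comm] at hdeg
    exact (Nat.eq_of_mul_eq_mul_left (Nat.pos_of_ne_zero hm0) hdeg).symm
  obtain ⟨c, hc⟩ := exists_isApproxRoot_X_add_C hg₁ (by rwa [hg₁m, hg])
  have hroot : IsApproxRoot m f (k₁ + Polynomial.C (Polynomial.C c)) := by
    have := (hc.map (algebraMap K K[X])).comp hk₁ (hk₁h ▸ hh0)
    rw [hg₁m, hg, Polynomial.comp_eq_aeval, Polynomial.aeval_map_algebraMap, ← hfk₁] at this
    simpa using this
  have hmX : (m : K[X]) ≠ 0 := by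
    rw [← map_natCast Polynomial.C m]
    exact Polynomial.C_ne_zero.mpr hm
  have heq := hh.unique hmX hroot (by rw [Polynomial.natDegree_add_C, hk₁h])
  refine ⟨g₁.comp (Polynomial.X - Polynomial.C c), ?_⟩
  rw [Polynomial.aeval_comp, map_sub, Polynomial.aeval_X, Polynomial.aeval_C, heq,
    Polynomial.algebraMap_apply, Polynomial.algebraMap_eq, add_sub_cancel_right, hfk₁]

end Decompositions

section JointDegree

variable {K σ : Type*} [CommRing K] {p q : (MvPolynomial σ K)[X]}

/-- The total degree of a polynomial in `y` over `K[x]`, counted jointly in `x` and `y`. -/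
noncomputable def jointDegree (p : (MvPolynomial σ K)[X]) : ℕ :=
  ((optionEquivLeft K σ).symm p).totalDegree

lemma jointDegree_add_le : jointDegree (p + q) ≤ max (jointDegree p) (jointDegree q) := by
  rw [jointDegree, map_add]
  exact totalDegree_add _ _

lemma jointDegree_sub_le : jointDegree (p - q) ≤ max (jointDegree p) (jointDegree q) := by
  rw [jointDegree, map_sub]
  exact totalDegree_sub _ _

lemma jointDegree_C_mul_X_pow_le (c : MvPolynomial σ K) (j : ℕ) :
    jointDegree (Polynomial.C c * Polynomial.X ^ j) ≤ c.totalDegree + j := by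
  have hC : (optionEquivLeft K σ).symm (Polynomial.C c) = rename some c := by
    rw [AlgEquiv.symm_apply_eq]
    induction c using MvPolynomial.induction_on with
    | C a => simp
    | add p q hp hq => simp [hp, hq]
    | mul_X p i hp => simp [hp]
  rw [jointDegree, map_mul, map_pow, optionEquivLeft_symm_X, hC, X_pow_eq_monomial]
  refine (totalDegree_mul _ _).trans
    (add_le_add (totalDegree_rename_le _ _) ((totalDegree_monomial_le _ _).trans ?_))
  simp

lemma jointDegree_pow_le (j : ℕ) : jointDegree (p ^ j) ≤ j * jointDegree p := by
  rw [jointDegree, map_pow]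
  exact totalDegree_pow _ _

lemma jointDegree_aeval_le (h : (MvPolynomial σ K)[X]) (g : K[X]) :
    jointDegree (Polynomial.aeval h g) ≤ g.natDegree * jointDegree h := by
  rw [jointDegree, ← AlgEquiv.coe_toAlgHom, ← Polynomial.aeval_algHom_apply,
    Polynomial.aeval_eq_sum_range]
  refine totalDegree_finsetSum_le fun i hi => ?_
  exact (totalDegree_smul_le _ _).trans <| (totalDegree_pow _ _).trans <|
    Nat.mul_le_mul_right _ (Finset.mem_range_succ_iff.mp hi)

lemma natDegree_le_jointDegree (p : (MvPolynomial σ K)[X]) : p.natDegree ≤ jointDegree p := by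
  have hdeg := natDegree_optionEquivLeft K ((optionEquivLeft K σ).symm p)
  rw [AlgEquiv.apply_symm_apply] at hdeg
  exact hdeg ▸ degreeOf_le_totalDegree _ _

lemma totalDegree_coeff_add_le {j : ℕ} (hj : j ≤ jointDegree p) :
    (p.coeff j).totalDegree + j ≤ jointDegree p := by
  have hcoeff := totalDegree_coeff_optionEquivLeft_add_le K σ ((optionEquivLeft K σ).symm p) j hj
  rwa [AlgEquiv.apply_symm_apply] at hcoeff

lemma totalDegree_leadingCoeff_le (p : (MvPolynomial σ K)[X]) :
    p.leadingCoeff.totalDegree ≤ jointDegree p :=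
  le_of_add_le_left (totalDegree_coeff_add_le (natDegree_le_jointDegree p))

end JointDegree

section JointDegreeApproxRoot

variable {K σ : Type*} [Field K]

lemma exists_degree_sub_pow_lt {f h : (MvPolynomial σ K)[X]} {e m : ℕ} (he : e ≠ 0)
    (hm : (m : K) ≠ 0) (hf : f.IsMonicOfDegree (e * m)) (hfj : jointDegree f ≤ e * m)
    (hh : h.IsMonicOfDegree e) (hhj : jointDegree h ≤ e)
    (hle : ((e * (m - 1) : ℕ) : WithBot ℕ) ≤ (f - h ^ m).degree) :
    ∃ h' : (MvPolynomial σ K)[X], h'.IsMonicOfDegree e ∧ jointDegree h' ≤ e ∧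
      (f - h' ^ m).degree < (f - h ^ m).degree := by
  have hm0 : m ≠ 0 := by rintro rfl; simp at hm
  set r := f - h ^ m
  have hr0 : r ≠ 0 := Polynomial.degree_ne_bot.mp
    (ne_bot_of_le_ne_bot (WithBot.natCast_ne_bot _) hle)
  have hrj : jointDegree r ≤ e * m := jointDegree_sub_le.trans <| max_le hfj <|
    (jointDegree_pow_le m).trans (mul_comm e m ▸ Nat.mul_le_mul_left m hhj)
  obtain ⟨j, hj⟩ : ∃ j, r.natDegree = j + e * (m - 1) :=
    Nat.exists_eq_add_of_le' (Polynomial.le_natDegree_of_coe_le_degree hle)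
  have hem : e + e * (m - 1) = e * m := by
    rw [add_comm, ← mul_add_one, Nat.sub_one_add_one hm0]
  have hje : j < e := by
    have hlt : r.natDegree < e * m := hf.natDegree_sub_lt (mul_ne_zero he hm0) (hh.pow m)
    omega
  set c := (m : K)⁻¹ • r.leadingCoeff
  have hcj : c.totalDegree + j ≤ e := by
    have hc : c.totalDegree ≤ r.leadingCoeff.totalDegree := totalDegree_smul_le _ _
    have hlc := totalDegree_coeff_add_le (natDegree_le_jointDegree r)
    rw [Polynomial.coeff_natDegree] at hlc
    omega
  have hstep := degree_sub_add_pow_lt (f := f) (m := m) (c := c) hh.monic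
    (hh.natDegree_eq.symm ▸ hje)
  rw [hh.natDegree_eq, ← hj, ← Polynomial.degree_eq_natDegree hr0, Polynomial.coeff_natDegree]
    at hstep
  refine ⟨h + Polynomial.C c * Polynomial.X ^ j, hh.add_right ?_, ?_, hstep le_rfl ?_⟩
  · exact (Polynomial.natDegree_C_mul_X_pow_le c j).trans_lt hje
  · exact jointDegree_add_le.trans (max_le hhj ((jointDegree_C_mul_X_pow_le c j).trans hcj))
  · rw [mul_smul_comm, ← nsmul_eq_mul, ← Nat.cast_smul_eq_nsmul K, inv_smul_smul₀ hm]

lemma exists_isApproxRoot_jointDegree_le {f : (MvPolynomial σ K)[X]} {e m : ℕ} (he : e ≠ 0)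
    (hm : (m : K) ≠ 0) (hf : f.IsMonicOfDegree (e * m)) (hfj : jointDegree f ≤ e * m) :
    ∃ h, IsApproxRoot m f h ∧ h.natDegree = e ∧ jointDegree h ≤ e := by
  obtain ⟨h, ⟨hh, hhj⟩, hmin⟩ := exists_minimalFor_of_wellFoundedLT
    (fun h : (MvPolynomial σ K)[X] => h.IsMonicOfDegree e ∧ jointDegree h ≤ e)
    (fun h => (f - h ^ m).degree)
    ⟨Polynomial.X ^ e, Polynomial.isMonicOfDegree_X_pow _ e,
      by simpa using jointDegree_C_mul_X_pow_le (1 : MvPolynomial σ K) e⟩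
  refine ⟨h, ⟨hh.monic, ?_⟩, hh.natDegree_eq, hhj⟩
  by_contra! hle
  rw [hh.natDegree_eq] at hle
  obtain ⟨h', hh', hhj', hlt⟩ := exists_degree_sub_pow_lt he hm hf hfj hh hhj hle
  exact hlt.not_ge (hmin ⟨hh', hhj'⟩ hlt.le)

end JointDegreeApproxRoot

section LeadingForm

variable {K σ : Type*} [CommSemiring K] {p : MvPolynomial σ K}

/-- The homogeneous part of top degree. -/
noncomputable def leadingForm (p : MvPolynomial σ K) : MvPolynomial σ K :=
  homogeneousComponent p.totalDegree p

lemma exists_coeff_leadingForm_ne_zero (hp : p ≠ 0) : ∃ s, coeff s (leadingForm p) ≠ 0 := by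
  obtain ⟨s, hs, hsup⟩ := Finset.exists_mem_eq_sup p.support (support_nonempty.mpr hp)
    fun s => s.sum fun _ e => e
  refine ⟨s, ?_⟩
  rw [leadingForm, coeff_homogeneousComponent, if_pos (by exact hsup.symm)]
  exact mem_support_iff.mp hs

lemma leadingForm_ne_zero (hp : p ≠ 0) : leadingForm p ≠ 0 :=
  ne_zero_iff.mpr (exists_coeff_leadingForm_ne_zero hp)

lemma isHomogeneous_leadingForm (p : MvPolynomial σ K) :
    (leadingForm p).IsHomogeneous p.totalDegree :=
  homogeneousComponent_isHomogeneous _ _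

/-- Restriction to the line spanned by `b`, as a polynomial in the parameter of that line. -/
noncomputable def line (b : σ → K) : MvPolynomial σ K →ₐ[K] K[X] :=
  aeval fun i => Polynomial.C (b i) * Polynomial.X

lemma coeff_line (b : σ → K) (p : MvPolynomial σ K) (j : ℕ) :
    (line b p).coeff j = eval b (homogeneousComponent j p) := by
  classical
  induction p using MvPolynomial.induction_on' with
  | monomial s c =>
    have hline : line b (monomial s c) =
        Polynomial.C (eval b (monomial s c)) * Polynomial.X ^ s.degree := by
      simp only [line, aeval_monomial, eval_monomial, Finsupp.prod, mul_pow,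
        Finset.prod_mul_distrib, Finset.prod_pow_eq_pow_sum, map_mul, map_prod, map_pow, mul_assoc]
      rfl
    rw [hline, Polynomial.coeff_C_mul_X_pow, homogeneousComponent_of_mem
      ((mem_homogeneousSubmodule _ _).mpr (isHomogeneous_monomial c rfl)), apply_ite (eval b),
      map_zero]
  | add p q hp hq => rw [map_add, Polynomial.coeff_add, hp, hq, map_add, map_add]

lemma coeff_line_totalDegree (b : σ → K) (p : MvPolynomial σ K) :
    (line b p).coeff p.totalDegree = eval b (leadingForm p) :=
  coeff_line b p _

end LeadingForm

section Remainder

variable {K : Type*} [Field K]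

/-- Division with remainder by powers of `h`, allowing only quotients in `K`. -/
lemma exists_degree_sub_aeval_le {S : Type*} [CommRing S] [IsDomain S] [Algebra K S] {p h : S[X]}
    (hh : h.Monic) (hp : ∀ g : K[X], p ≠ Polynomial.aeval h g) :
    ∃ g : K[X], (p - Polynomial.aeval h g).degree ≤ p.degree ∧
      ¬ (h.natDegree ∣ (p - Polynomial.aeval h g).natDegree ∧
        (p - Polynomial.aeval h g).leadingCoeff ∈ Set.range (algebraMap K S)) := by
  obtain ⟨g, -, hmin⟩ := exists_minimalFor_of_wellFoundedLT (fun _ : K[X] => True)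
    (fun g => (p - Polynomial.aeval h g).degree) ⟨0, trivial⟩
  have hle (g' : K[X]) :
      (p - Polynomial.aeval h g).degree ≤ (p - Polynomial.aeval h g').degree :=
    (le_total _ _).elim id (hmin trivial)
  refine ⟨g, by simpa using hle 0, ?_⟩
  rintro ⟨⟨j, hj⟩, c, hc⟩
  set t := p - Polynomial.aeval h g
  have ht : t ≠ 0 := sub_ne_zero.mpr (hp g)
  have hc0 : algebraMap K S c ≠ 0 := by rwa [hc, Polynomial.leadingCoeff_ne_zero]
  have hq0 : Polynomial.C (algebraMap K S c) * h ^ j ≠ 0 :=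
    mul_ne_zero (Polynomial.C_ne_zero.mpr hc0) (hh.pow j).ne_zero
  have hlt : (t - Polynomial.C (algebraMap K S c) * h ^ j).degree < t.degree := by
    refine Polynomial.degree_sub_lt_left ?_ ht ?_
    · rw [Polynomial.degree_eq_natDegree ht, Polynomial.degree_eq_natDegree hq0, hj,
        Polynomial.natDegree_C_mul hc0, hh.natDegree_pow, mul_comm]
    · rw [Polynomial.leadingCoeff_mul, (hh.pow j).leadingCoeff, Polynomial.leadingCoeff_C, hc,
        mul_one]
  refine hlt.not_ge ((hle (g + Polynomial.C c * Polynomial.X ^ j)).trans_eq ?_)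
  rw [map_add, map_mul, map_pow, Polynomial.aeval_C, Polynomial.aeval_X, ← sub_sub,
    Polynomial.algebraMap_apply]

lemma jointDegree_sub_aeval_le {σ : Type*} {p h : (MvPolynomial σ K)[X]} {g : K[X]}
    (hhj : jointDegree h ≤ h.natDegree) (hdeg : (p - Polynomial.aeval h g).degree ≤ p.degree) :
    jointDegree (p - Polynomial.aeval h g) ≤ jointDegree p := by
  refine jointDegree_sub_le.trans (max_le le_rfl ?_)
  calc jointDegree (Polynomial.aeval h g)
    _ ≤ g.natDegree * h.natDegree := (jointDegree_aeval_le h g).trans (Nat.mul_le_mul_left _ hhj)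
    _ = (p - (p - Polynomial.aeval h g)).natDegree := by rw [← natDegree_aeval, sub_sub_cancel]
    _ ≤ p.natDegree := (Polynomial.natDegree_sub_le_of_le le_rfl
      (Polynomial.natDegree_le_natDegree hdeg)).trans_eq (max_self _)
    _ ≤ jointDegree p := natDegree_le_jointDegree p

/-- Where the leading form of the leading coefficient of `t` does not vanish, restriction to the
line preserves the degree of that coefficient, so it stays non-constant if it was, while elements of
`K[h]` have constant leading coefficients and degrees divisible by `deg h`. -/
lemma dvd_natDegree_and_leadingCoeff_mem_range {σ : Type*} {t h : (MvPolynomial σ K)[X]}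
    {g : K[X]} {b : σ → K} (hh : h.Monic) (hh0 : h.natDegree ≠ 0)
    (hb : eval b (leadingForm t.leadingCoeff) ≠ 0)
    (ht : Polynomial.mapAlgHom (line b) t =
      Polynomial.aeval (Polynomial.mapAlgHom (line b) h) g) :
    h.natDegree ∣ t.natDegree ∧
      t.leadingCoeff ∈ Set.range (algebraMap K (MvPolynomial σ K)) := by
  rw [← coeff_line_totalDegree] at hb
  have hlc : line b t.leadingCoeff ≠ 0 := by rintro h0; simp [h0] at hb
  set φ := Polynomial.mapAlgHom (line b)
  have hφh : (φ h).Monic := hh.map (line b : MvPolynomial σ K →+* K[X])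
  have hφh_deg : (φ h).natDegree = h.natDegree :=
    hh.natDegree_map (line b : MvPolynomial σ K →+* K[X])
  have hφt_deg : (φ t).natDegree = t.natDegree :=
    Polynomial.natDegree_map_of_leadingCoeff_ne_zero (line b : MvPolynomial σ K →+* K[X]) hlc
  have hφt_lc : (φ t).leadingCoeff = line b t.leadingCoeff :=
    Polynomial.leadingCoeff_map_of_leadingCoeff_ne_zero (line b : MvPolynomial σ K →+* K[X]) hlc
  refine ⟨?_, ?_⟩
  · rw [← hφt_deg, ht, natDegree_aeval, hφh_deg]
    exact dvd_mul_left _ _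
  · rw [← hφt_lc, ht, leadingCoeff_aeval (hφh_deg.symm ▸ hh0), hφh.leadingCoeff, one_pow, mul_one,
      Polynomial.algebraMap_eq, Polynomial.coeff_C] at hb
    have hconst := totalDegree_eq_zero_iff_eq_C.mp (of_not_not fun hne => hb (if_neg hne))
    exact ⟨_, hconst.symm⟩

lemma exists_forall_mapAlgHom_line_ne_aeval {σ : Type*} {p h : (MvPolynomial σ K)[X]}
    (hh : h.Monic) (hh0 : h.natDegree ≠ 0) (hhj : jointDegree h ≤ h.natDegree)
    (hp : ∀ g : K[X], p ≠ Polynomial.aeval h g) :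
    ∃ P : MvPolynomial σ K, P ≠ 0 ∧ P.totalDegree ≤ jointDegree p ∧
      ∀ b, eval b P ≠ 0 → ∀ g : K[X], Polynomial.mapAlgHom (line b) p ≠
        Polynomial.aeval (Polynomial.mapAlgHom (line b) h) g := by
  obtain ⟨g, hdeg, hcert⟩ := exists_degree_sub_aeval_le hh hp
  set t := p - Polynomial.aeval h g with t_def
  have ht : t ≠ 0 := sub_ne_zero.mpr (hp g)
  refine ⟨leadingForm t.leadingCoeff, leadingForm_ne_zero (Polynomial.leadingCoeff_ne_zero.mpr ht),
    (isHomogeneous_leadingForm _).totalDegree_le.trans <|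
      (totalDegree_leadingCoeff_le t).trans (jointDegree_sub_aeval_le hhj hdeg),
    fun b hb g' hg' => ?_⟩
  have ht_line : Polynomial.mapAlgHom (line b) t =
      Polynomial.aeval (Polynomial.mapAlgHom (line b) h) (g' - g) := by
    rw [t_def, map_sub, hg', ← Polynomial.aeval_algHom_apply, map_sub]
  exact hcert (dvd_natDegree_and_leadingCoeff_mem_range hh hh0 hb ht_line)

end Remainder

section Dehomogenization

variable {K σ : Type*} [CommSemiring K] {f : MvPolynomial (Option σ) K}

/-- The polynomial `f_D(x, 1)`, where `f_D` is the leading form of `f ∈ K[x, y]`. Its value at `a`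
is the coefficient of `y ^ D` in `f(x + a y, y)`. -/
noncomputable def affineLeadingForm (f : MvPolynomial (Option σ) K) : MvPolynomial σ K :=
  (optionEquivLeft K σ (leadingForm f)).eval 1

lemma eval_affineLeadingForm (a : σ → K) (f : MvPolynomial (Option σ) K) :
    eval a (affineLeadingForm f) = eval (fun v => v.elim 1 a) (leadingForm f) := by
  rw [optionEquivLeft_elim_eval, Polynomial.eval_one_map, affineLeadingForm]

lemma degree_eq_none_add_degree_some (s : Option σ →₀ ℕ) :
    s.degree = s none + s.some.degree := by
  simpa [Finsupp.degree_apply, Finsupp.sum] using s.sum_option_index_smul fun _ => (1 : ℕ)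

lemma affineLeadingForm_ne_zero (hf : f ≠ 0) : affineLeadingForm f ≠ 0 := by
  obtain ⟨s, hs⟩ := exists_coeff_leadingForm_ne_zero hf
  refine ne_zero_iff.mpr ⟨s.some, ?_⟩
  have hcoeff : coeff s.some (affineLeadingForm f) = coeff s (leadingForm f) := by
    rw [affineLeadingForm, Polynomial.eval_eq_sum_range, coeff_sum, Finset.sum_eq_single (s none)]
    · rw [one_pow, mul_one, optionEquivLeft_coeff_some_coeff_none]
    · intro i _ hi
      rw [one_pow, mul_one, optionEquivLeft_coeff_coeff]
      refine (isHomogeneous_leadingForm f).coeff_eq_zero fun hdeg => hi ?_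
      rw [← by_contra fun hne => hs ((isHomogeneous_leadingForm f).coeff_eq_zero hne),
        degree_eq_none_add_degree_some s, degree_eq_none_add_degree_some] at hdeg
      simpa using hdeg
    · intro hnone
      rw [Polynomial.coeff_eq_zero_of_natDegree_lt (by simpa using hnone), zero_mul, coeff_zero]
  rwa [hcoeff]

lemma totalDegree_affineLeadingForm_le (f : MvPolynomial (Option σ) K) :
    (affineLeadingForm f).totalDegree ≤ f.totalDegree := by
  rw [affineLeadingForm, Polynomial.eval_eq_sum_range]
  refine totalDegree_finsetSum_le fun i _ => ?_
  rw [one_pow, mul_one]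
  exact (totalDegree_coeff_optionEquivLeft_le K σ _ i).trans
    (isHomogeneous_leadingForm f).totalDegree_le

end Dehomogenization

section Shear

variable {K σ : Type*} [CommSemiring K]

/-- The substitution `f ↦ f(x + a y, y)`, where `none` is the index of the variable `y`. -/
noncomputable def shear (a : σ → K) : MvPolynomial (Option σ) K →ₐ[K] MvPolynomial (Option σ) K :=
  aeval fun v => v.elim (X none) fun i => X (some i) + C (a i) * X none

lemma shear_comp_shear (a b : σ → K) : (shear a).comp (shear b) = shear (a + b) := by
  refine algHom_ext fun v => ?_
  rcases v with _ | i <;> simp [shear]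
  ring

lemma shear_zero : shear (0 : σ → K) = AlgHom.id K _ := by
  ext (_ | i) <;> simp [shear]

lemma totalDegree_aeval_le {τ : Type*} {v : σ → MvPolynomial τ K} (hv : ∀ i, (v i).totalDegree ≤ 1)
    (p : MvPolynomial σ K) : (aeval v p).totalDegree ≤ p.totalDegree := by
  rw [aeval_def, eval₂_eq]
  refine totalDegree_finsetSum_le fun s hs => ?_
  calc (algebraMap K (MvPolynomial τ K) (coeff s p) * ∏ i ∈ s.support, v i ^ s i).totalDegree
    _ ≤ (∏ i ∈ s.support, v i ^ s i).totalDegree := by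
      refine (totalDegree_mul _ _).trans ?_
      rw [algebraMap_eq, totalDegree_C, zero_add]
    _ ≤ ∑ i ∈ s.support, (v i ^ s i).totalDegree := totalDegree_finsetProd _ _
    _ ≤ ∑ i ∈ s.support, s i := Finset.sum_le_sum fun i _ =>
      (totalDegree_pow _ _).trans ((Nat.mul_le_mul_left _ (hv i)).trans_eq (mul_one _))
    _ ≤ p.totalDegree := le_totalDegree hs

lemma totalDegree_shear_le (a : σ → K) (f : MvPolynomial (Option σ) K) :
    (shear a f).totalDegree ≤ f.totalDegree := by
  refine totalDegree_aeval_le ?_ f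
  rintro (_ | i)
  · exact (isHomogeneous_X K none).totalDegree_le
  · exact ((isHomogeneous_X K (some i)).add (isHomogeneous_C_mul_X (a i) none)).totalDegree_le

end Shear

section ShearEquiv

variable {K σ : Type*} [CommRing K]

/-- `f(x + a y, y)` as a polynomial in `y`. -/
noncomputable def shearEquiv (a : σ → K) : MvPolynomial (Option σ) K ≃ₐ[K] (MvPolynomial σ K)[X] :=
  (AlgEquiv.ofAlgHom (shear a) (shear (-a)) (by rw [shear_comp_shear, add_neg_cancel, shear_zero])
    (by rw [shear_comp_shear, neg_add_cancel, shear_zero])).trans (optionEquivLeft K σ)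

lemma shearEquiv_apply (a : σ → K) (f : MvPolynomial (Option σ) K) :
    shearEquiv a f = optionEquivLeft K σ (shear a f) := rfl

lemma jointDegree_shearEquiv_le (a : σ → K) (f : MvPolynomial (Option σ) K) :
    jointDegree (shearEquiv a f) ≤ f.totalDegree := by
  rw [shearEquiv_apply, jointDegree, AlgEquiv.symm_apply_apply]
  exact totalDegree_shear_le a f

lemma coeff_shearEquiv_totalDegree (a : σ → K) (f : MvPolynomial (Option σ) K) :
    (shearEquiv a f).coeff f.totalDegree = C (eval a (affineLeadingForm f)) := by
  have hdeg : ((shearEquiv a f).coeff f.totalDegree).totalDegree = 0 := by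
    by_contra hne
    have hle : f.totalDegree ≤ jointDegree (shearEquiv a f) := by
      by_contra! hlt
      exact hne (by rw [Polynomial.coeff_eq_zero_of_natDegree_lt
        ((natDegree_le_jointDegree _).trans_lt hlt), totalDegree_zero])
    have := totalDegree_coeff_add_le hle
    have := jointDegree_shearEquiv_le a f
    omega
  have hline : (Polynomial.mapAlgHom (aeval (0 : σ → K))).comp (shearEquiv a).toAlgHom =
      line fun v => v.elim 1 a := by
    ext (_ | i) <;> simp [shearEquiv, shear, line]
  rw [totalDegree_eq_zero_iff_eq_C.mp hdeg, eval_affineLeadingForm, ← coeff_line_totalDegree,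
    ← hline]
  simp [constantCoeff_eq]

end ShearEquiv

section PlaneRestriction

variable {K σ : Type*} [Field K] {a b : σ → K} {f : MvPolynomial (Option σ) K}

/-- The substitution `f ↦ f(b x + a y, y)`, where `none` is the index of the variable `y` of `f`,
and `x` and `y` are indexed by `0` and `1` in the result. -/
noncomputable def planeRestriction (a b : σ → K) :
    MvPolynomial (Option σ) K →ₐ[K] MvPolynomial (Fin 2) K :=
  aeval fun v => v.elim (X 1) fun i => C (b i) * X 0 + C (a i) * X 1

/-- A polynomial in `K[x, y]` as a polynomial in `y` over `K[x]`. -/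
noncomputable def toBivariate : MvPolynomial (Fin 2) K →ₐ[K] K[X][X] :=
  aeval ![Polynomial.C Polynomial.X, Polynomial.X]

lemma toBivariate_planeRestriction (a b : σ → K) (f : MvPolynomial (Option σ) K) :
    toBivariate (planeRestriction a b f) = Polynomial.mapAlgHom (line b) (shearEquiv a f) := by
  suffices h : toBivariate.comp (planeRestriction a b) =
      (Polynomial.mapAlgHom (line b)).comp (shearEquiv a).toAlgHom from DFunLike.congr_fun h f
  refine algHom_ext fun v => ?_
  rcases v with _ | i <;> simp [planeRestriction, toBivariate, shearEquiv, shear, line]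

/-- `f(x + a y, y)` as a polynomial in `y`, normalized to be monic when the leading form of `f` does
not vanish at `(a, 1)`. -/
noncomputable def normalizedShear (a : σ → K) (f : MvPolynomial (Option σ) K) :
    (MvPolynomial σ K)[X] :=
  (eval a (affineLeadingForm f))⁻¹ • shearEquiv a f

lemma jointDegree_normalizedShear_le (a : σ → K) (f : MvPolynomial (Option σ) K) :
    jointDegree (normalizedShear a f) ≤ f.totalDegree := by
  rw [jointDegree, normalizedShear, map_smul]
  exact (totalDegree_smul_le _ _).trans (jointDegree_shearEquiv_le a f)

lemma isMonicOfDegree_normalizedShear (ha : eval a (affineLeadingForm f) ≠ 0) :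
    (normalizedShear a f).IsMonicOfDegree f.totalDegree := by
  refine (Polynomial.isMonicOfDegree_iff _ _).mpr
    ⟨(natDegree_le_jointDegree _).trans (jointDegree_normalizedShear_le a f), ?_⟩
  rw [normalizedShear, Polynomial.coeff_smul, coeff_shearEquiv_totalDegree, smul_eq_C_mul, ← C_mul,
    inv_mul_cancel₀ ha, C_1]

lemma decomposable_of_normalizedShear_eq_aeval (ha : eval a (affineLeadingForm f) ≠ 0)
    {h : (MvPolynomial σ K)[X]} {g : K[X]} (hg : 2 ≤ g.natDegree)
    (hf : normalizedShear a f = Polynomial.aeval h g) : f.Decomposable := by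
  refine ⟨eval a (affineLeadingForm f) • g, (shearEquiv a).symm h, ?_, ?_⟩
  · rwa [Polynomial.natDegree_smul _ ha]
  · rw [map_smul, ← AlgEquiv.coe_toAlgHom, Polynomial.aeval_algHom_apply, ← hf,
      AlgEquiv.coe_toAlgHom, ← map_smul, normalizedShear, smul_inv_smul₀ ha,
      AlgEquiv.symm_apply_apply]

lemma mapAlgHom_line_normalizedShear {g : K[X]} {k : MvPolynomial (Fin 2) K}
    (hk : planeRestriction a b f = Polynomial.aeval k g) :
    Polynomial.mapAlgHom (line b) (normalizedShear a f) =
      Polynomial.aeval (toBivariate k) ((eval a (affineLeadingForm f))⁻¹ • g) := by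
  rw [normalizedShear, map_smul, ← toBivariate_planeRestriction, hk, map_smul,
    Polynomial.aeval_algHom_apply]

lemma exists_forall_planeRestriction_ne_aeval (hf : f.Indecomposable)
    (ha : eval a (affineLeadingForm f) ≠ 0) {m : ℕ} (hmD : m ∣ f.totalDegree) (hm : 2 ≤ m)
    (hmK : (m : K) ≠ 0) :
    ∃ P : MvPolynomial σ K, P ≠ 0 ∧ P.totalDegree ≤ f.totalDegree ∧
      ∀ b, eval b P ≠ 0 → ∀ (g : K[X]) (k : MvPolynomial (Fin 2) K), g.natDegree = m →
        planeRestriction a b f ≠ Polynomial.aeval k g := by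
  obtain ⟨e, he⟩ := hmD
  have he0 : e ≠ 0 := by rintro rfl; exact hf.1.ne' he
  rw [mul_comm] at he
  have hmonic := isMonicOfDegree_normalizedShear ha
  have hjoint := jointDegree_normalizedShear_le a f
  obtain ⟨h, hroot, rfl, hhj⟩ :=
    exists_isApproxRoot_jointDegree_le he0 hmK (he ▸ hmonic) (he ▸ hjoint)
  have hnot (g : K[X]) : normalizedShear a f ≠ Polynomial.aeval h g := by
    intro hg
    have hgm : g.natDegree = m := by
      have hdeg := natDegree_aeval h g
      rw [← hg, hmonic.natDegree_eq, he, mul_comm] at hdeg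
      exact (Nat.eq_of_mul_eq_mul_right (Nat.pos_of_ne_zero he0) hdeg).symm
    exact hf.2 (decomposable_of_normalizedShear_eq_aeval ha (hgm ▸ hm) hg)
  obtain ⟨P, hP, hPdeg, hPb⟩ := exists_forall_mapAlgHom_line_ne_aeval hroot.monic he0 hhj hnot
  refine ⟨P, hP, hPdeg.trans hjoint, fun b hb g k hg hk => ?_⟩
  have hroot_b := hroot.map (line b : MvPolynomial σ K →+* K[X])
  obtain ⟨g₁, hg₁⟩ := hroot_b.exists_eq_aeval
    (by rwa [hroot.monic.natDegree_map]) hmK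
    ((Polynomial.natDegree_smul g (inv_ne_zero ha)).trans hg) (mapAlgHom_line_normalizedShear hk)
  exact hPb b hb g₁ hg₁

lemma natDegree_dvd_totalDegree_of_planeRestriction_eq_aeval
    (ha : eval a (affineLeadingForm f) ≠ 0) {g : K[X]} {k : MvPolynomial (Fin 2) K}
    (hk : planeRestriction a b f = Polynomial.aeval k g) : g.natDegree ∣ f.totalDegree := by
  have hmonic := isMonicOfDegree_normalizedShear ha
  have hmap : (Polynomial.mapAlgHom (line b) (normalizedShear a f)).natDegree = f.totalDegree :=
    (hmonic.monic.natDegree_map (line b : MvPolynomial σ K →+* K[X])).trans hmonic.natDegree_eq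
  rw [mapAlgHom_line_normalizedShear hk, natDegree_aeval,
    Polynomial.natDegree_smul g (inv_ne_zero ha)] at hmap
  exact ⟨_, hmap.symm⟩

lemma indecomposable_planeRestriction (hf : 0 < f.totalDegree)
    (ha : eval a (affineLeadingForm f) ≠ 0)
    (hb : ∀ m ∈ f.totalDegree.divisors.erase 1, ∀ (g : K[X]) (k : MvPolynomial (Fin 2) K),
      g.natDegree = m → planeRestriction a b f ≠ Polynomial.aeval k g) :
    (planeRestriction a b f).Indecomposable := by
  refine ⟨Nat.pos_of_ne_zero fun hconst => ?_, ?_⟩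
  · have hk := totalDegree_eq_zero_iff_eq_C.mp hconst
    rw [← algebraMap_eq, ← Polynomial.aeval_C (X 0 : MvPolynomial (Fin 2) K)] at hk
    have hdvd := natDegree_dvd_totalDegree_of_planeRestriction_eq_aeval ha hk
    rw [Polynomial.natDegree_C, zero_dvd_iff] at hdvd
    exact hf.ne' hdvd
  · rintro ⟨g, k, hg, hk⟩
    have hdvd := natDegree_dvd_totalDegree_of_planeRestriction_eq_aeval ha hk
    have hmem : g.natDegree ∈ f.totalDegree.divisors.erase 1 :=
      Finset.mem_erase.mpr ⟨by omega, Nat.mem_divisors.mpr ⟨hdvd, hf.ne'⟩⟩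
    exact hb _ hmem g k rfl hk

end PlaneRestriction

section Counting

lemma card_exists_mem_le {ι U : Type*} [Finite U] {I : Finset ι} {R : ι → U → Prop} {B : ℝ}
    (hR : ∀ i ∈ I, (Nat.card {u // R i u} : ℝ) ≤ B) :
    (Nat.card {u // ∃ i ∈ I, R i u} : ℝ) ≤ I.card * B := by
  have hunion : {u | ∃ i ∈ I, R i u} = ⋃ i ∈ I, {u | R i u} := by ext; simp
  calc (Nat.card {u // ∃ i ∈ I, R i u} : ℝ)
    _ = ((⋃ i ∈ I, {u | R i u}).ncard : ℝ) := by rw [← hunion]; rfl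
    _ ≤ ∑ i ∈ I, (Nat.card {u // R i u} : ℝ) := by
      exact_mod_cast Finset.set_ncard_biUnion_le I fun i => {u | R i u}
    _ ≤ I.card * B := (Finset.sum_le_card_nsmul I _ B hR).trans_eq (nsmul_eq_mul _ _)

lemma card_prod_le {T U : Type*} [Finite T] [Finite U] {p : T → Prop} {R : T → U → Prop}
    {A B : ℝ} (hB : 0 ≤ B) (hp : (Nat.card {r // p r} : ℝ) ≤ A)
    (hR : ∀ r, ¬ p r → (Nat.card {s // R r s} : ℝ) ≤ B) :
    (Nat.card {x : T × U // R x.1 x.2} : ℝ) ≤ A * Nat.card U + Nat.card T * B := by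
  classical
  have := Fintype.ofFinite T
  have hfiber (r : T) :
      (Nat.card {s // R r s} : ℝ) ≤ (if p r then 1 else 0) * Nat.card U + B := by
    split_ifs with hr
    · have hle : (Nat.card {s // R r s} : ℝ) ≤ Nat.card U := by
        exact_mod_cast Finite.card_subtype_le _
      linarith
    · simpa using hR r hr
  calc (Nat.card {x : T × U // R x.1 x.2} : ℝ)
    _ = ∑ r, (Nat.card {s // R r s} : ℝ) := by
      rw [Nat.card_congr (Equiv.subtypeProdEquivSigmaSubtype R), Nat.card_sigma, Nat.cast_sum]
    _ ≤ ∑ r, ((if p r then 1 else 0) * (Nat.card U : ℝ) + B) :=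
      Finset.sum_le_sum fun r _ => hfiber r
    _ = Nat.card {r // p r} * Nat.card U + Nat.card T * B := by
      rw [Finset.sum_add_distrib, ← Finset.sum_mul, Finset.sum_boole, Finset.sum_const,
        Finset.card_univ, nsmul_eq_mul, ← Nat.card_eq_fintype_card, ← Fintype.card_subtype,
        ← Nat.card_eq_fintype_card]
    _ ≤ A * Nat.card U + Nat.card T * B := by gcongr

lemma card_subtype_add_card_subtype_not {U : Type*} [Finite U] (p : U → Prop) :
    Nat.card {u // p u} + Nat.card {u // ¬ p u} = Nat.card U := by
  classical
  rw [← Nat.card_sum, Nat.card_congr (Equiv.sumCompl p)]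

end Counting

section HittingSets

variable {F σ T : Type*} [Field F] [Finite T] {H : T → σ → F} {δ : ℝ}
  {f : MvPolynomial (Option σ) F}

lemma card_not_indecomposable_planeRestriction_le (hind : f.Indecomposable)
    (hD : (f.totalDegree : F) ≠ 0)
    (hH : ∀ P : MvPolynomial σ F, P ≠ 0 → P.totalDegree ≤ f.totalDegree →
      (Nat.card {s // eval (H s) P = 0} : ℝ) ≤ δ * Nat.card T)
    {a : σ → F} (ha : eval a (affineLeadingForm f) ≠ 0) :
    (Nat.card {s // ¬ (planeRestriction a (H s) f).Indecomposable} : ℝ) ≤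
      (f.totalDegree.divisors.card - 1) * (δ * Nat.card T) := by
  have hcert : ∀ m ∈ f.totalDegree.divisors.erase 1, ∃ P : MvPolynomial σ F, P ≠ 0 ∧
      P.totalDegree ≤ f.totalDegree ∧ ∀ b, eval b P ≠ 0 →
        ∀ (g : F[X]) (k : MvPolynomial (Fin 2) F), g.natDegree = m →
          planeRestriction a b f ≠ Polynomial.aeval k g := by
    intro m hm
    obtain ⟨hm1, hmD⟩ := Finset.mem_erase.mp hm
    have hdvd := Nat.dvd_of_mem_divisors hmD
    have hmpos := Nat.pos_of_mem_divisors hmD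
    have hmF : (m : F) ≠ 0 := ne_zero_of_dvd_ne_zero hD (Nat.cast_dvd_cast hdvd)
    exact exists_forall_planeRestriction_ne_aeval hind ha hdvd (by omega) hmF
  choose! P hP0 hPdeg hPb using hcert
  have hbad (s : T) (hs : ¬ (planeRestriction a (H s) f).Indecomposable) :
      ∃ m ∈ f.totalDegree.divisors.erase 1, eval (H s) (P m) = 0 := by
    by_contra! hne
    exact hs (indecomposable_planeRestriction hind.1 ha fun m hm => hPb m hm _ (hne m hm))
  calc (Nat.card {s // ¬ (planeRestriction a (H s) f).Indecomposable} : ℝ)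
    _ ≤ Nat.card {s // ∃ m ∈ f.totalDegree.divisors.erase 1, eval (H s) (P m) = 0} := by
      exact_mod_cast Nat.card_mono (Set.toFinite _) hbad
    _ ≤ (f.totalDegree.divisors.erase 1).card * (δ * Nat.card T) :=
      card_exists_mem_le fun m hm => hH _ (hP0 m hm) (hPdeg m hm)
    _ = (f.totalDegree.divisors.card - 1) * (δ * Nat.card T) := by
      rw [Finset.cast_card_erase_of_mem (Nat.one_mem_divisors.mpr hind.1.ne')]

end HittingSets

section Degree

lemma natCast_ne_zero_of_mul_pred_lt_ringChar {F : Type*} [NonAssocSemiring F] [Nontrivial F]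
    {d k : ℕ} (hchar : d * (d - 1) < ringChar F) (hk : k ≠ 0) (hkd : k ≤ d) : (k : F) ≠ 0 := by
  intro h0
  have hdvd := (CharP.cast_eq_zero_iff F (ringChar F) k).mp h0
  have hle : d * (d - 1) < k := hchar.trans_le (Nat.le_of_dvd (Nat.pos_of_ne_zero hk) hdvd)
  obtain rfl : d = 1 := by
    by_contra hd
    have : d * 1 ≤ d * (d - 1) := Nat.mul_le_mul_left d (by omega)
    omega
  obtain rfl : k = 1 := by omega
  rw [Nat.cast_one] at h0
  exact one_ne_zero h0

lemma card_divisors_le_two_pow {k d : ℕ} (hkd : k ≤ d) : k.divisors.card ≤ 2 ^ (d - 1) :=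
  (Nat.card_divisors_le_self k).trans <| hkd.trans <|
    Nat.le_of_pred_lt Nat.lt_two_pow_self

end Degree

end PlaneRestriction

open PlaneRestriction in
theorem restriction_preserves_indecomposability_general {F σ T : Type*} [Field F] [Finite T]
    (H : T → σ → F) {δ : ℝ} {f : MvPolynomial (Option σ) F} (hind : f.Indecomposable)
    (hD : (f.totalDegree : F) ≠ 0)
    (hH : ∀ P : MvPolynomial σ F, P ≠ 0 → P.totalDegree ≤ f.totalDegree →
      (Nat.card {s // eval (H s) P = 0} : ℝ) ≤ δ * Nat.card T) :
    (1 - f.totalDegree.divisors.card * δ) * (Nat.card T : ℝ) ^ 2 ≤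
      Nat.card {p : T × T // (planeRestriction (H p.1) (H p.2) f).Indecomposable} := by
  have hf0 : f ≠ 0 := by rintro rfl; simp at hD
  have hδ : 0 ≤ δ * Nat.card T := (Nat.cast_nonneg _).trans (hH 1 one_ne_zero (by simp))
  have hdiv : (1 : ℝ) ≤ f.totalDegree.divisors.card := by
    exact_mod_cast Finset.card_pos.mpr ⟨1, Nat.one_mem_divisors.mpr hind.1.ne'⟩
  have hbad := card_prod_le (mul_nonneg (sub_nonneg.mpr hdiv) hδ)
    (hH _ (affineLeadingForm_ne_zero hf0) (totalDegree_affineLeadingForm_le f))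
    fun _ ha => card_not_indecomposable_planeRestriction_le hind hD hH ha
  have hcompl : (Nat.card {p : T × T // (planeRestriction (H p.1) (H p.2) f).Indecomposable} : ℝ) +
      Nat.card {p : T × T // ¬ (planeRestriction (H p.1) (H p.2) f).Indecomposable} =
        (Nat.card T : ℝ) ^ 2 := by
    rw [sq]
    exact_mod_cast (card_subtype_add_card_subtype_not _).trans (Nat.card_prod T T)
  linarith

/-- **Restriction to a pseudorandom plane preserves indecomposability.**
Let `F` be a finite field (of prime-power size `q`) of characteristic at least
`d(d−1)+1`, and let `H : T → Fⁿ` be a hitting set generator with density `1−δ` for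
`n`-variate polynomials of degree at most `2d−1` over `F`. Let `f ∈ F[x₁,…,xₙ,y]` be an
indecomposable polynomial of total degree at most `d`. For `(r,s) ∈ T×T`, let
`a = H(r)`, `b = H(s)`, and `F_{r,s} = f(b₁x+a₁y, …, bₙx+aₙy, y) ∈ F[x,y]`. Then the
number of pairs `(r,s)` for which `F_{r,s}` is indecomposable over `F` is at least
`(1 − 2^(d−1)·δ)·|T|²`. -/
theorem restriction_preserves_indecomposability
    (F : Type) [Field F] [Fintype F] (n d : ℕ) (hn : 1 ≤ n) (hd : 1 ≤ d)
    (hchar : d * (d - 1) + 1 ≤ ringChar F)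
    (δ : ℝ) (hδ : 0 ≤ δ)
    (T : Type) [Finite T] [Nonempty T] (H : T → Fin n → F)
    (hH : ∀ P : MvPolynomial (Fin n) F, P ≠ 0 → P.totalDegree ≤ 2 * d - 1 →
      (Nat.card {s : T // eval (H s) P = 0} : ℝ) ≤ δ * (Nat.card T : ℝ))
    (f : MvPolynomial (Option (Fin n)) F)
    (hdeg : f.totalDegree ≤ d) (hind : f.Indecomposable) :
    (1 - 2 ^ (d - 1) * δ) * (Nat.card T : ℝ) ^ 2 ≤
      (Nat.card {p : T × T //
        (aeval (fun v : Option (Fin n) => v.elim (X 1)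
            (fun i => C (H p.2 i) * X 0 + C (H p.1 i) * X 1)) f
          : MvPolynomial (Fin 2) F).Indecomposable} : ℝ) := by
  have hD := PlaneRestriction.natCast_ne_zero_of_mul_pred_lt_ringChar hchar hind.1.ne' hdeg
  have hdiv : (f.totalDegree.divisors.card : ℝ) ≤ 2 ^ (d - 1) := by
    exact_mod_cast PlaneRestriction.card_divisors_le_two_pow hdeg
  exact le_trans (by gcongr) <| restriction_preserves_indecomposability_general H hind hD
    fun P hP hPdeg => hH P hP (by omega)
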